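/- arXiv:1404.7205 — 7 statements merged into one kernel-verified Lean document; each statement's English description precedes it below -/
import Mathlib

section
/- The module union operator ⊔ is commutative and associative and has identity element ⟨∅,∅,∅,∅⟩: whenever P1 ⊔ P2 is defined, so is P2 ⊔ P1 and P1 ⊔ P2 = P2 ⊔ P1; whenever (P1 ⊔ P2) ⊔ P3 and P1 ⊔ (P2 ⊔ P3) are both defined, they are equal; and for every module P, P ⊔ ⟨∅,∅,∅,∅⟩ is defined and equals P. -/
open scoped Classical

noncomputable section

/-- A rule: an optional head atom (none = integrity constraint), a flag marking
choice facts, a set of positive body atoms and a set of negative body atoms. -/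
structure ASPRule (A : Type*) where
  head : Option A
  isChoice : Bool
  pos : Set A
  neg : Set A

/-- Atoms occurring in a rule. -/
def ASPRule.atoms {A : Type*} (r : ASPRule A) : Set A :=
  (r.head.elim ∅ fun a => {a}) ∪ r.pos ∪ r.neg

/-- Atoms occurring in a program. -/
def progAtoms {A : Type*} (R : Set (ASPRule A)) : Set A :=
  ⋃ r ∈ R, r.atoms

/-- Least model of a positive program (pairs of head and positive body):
the least set of atoms closed under the rules. -/
def LM {A : Type*} (Q : Set (A × Set A)) : Set A :=
  ⋂₀ {S | ∀ p ∈ Q, p.2 ⊆ S → p.1 ∈ S}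

/-- The reduct of a program w.r.t. an interpretation `M`: it contains
`head(r) ← body⁺(r)` for every headed non-choice rule whose negative body is
disjoint from `M`, and the fact `a` for every choice fact `{a}` with `a ∈ M`. -/
def reduct {A : Type*} (R : Set (ASPRule A)) (M : Set A) : Set (A × Set A) :=
  {p | ∃ r ∈ R,
    (r.isChoice = false ∧ r.head = some p.1 ∧ r.pos = p.2 ∧ r.neg ∩ M = ∅) ∨
    (r.isChoice = true ∧ r.head = some p.1 ∧ p.2 = (∅ : Set A) ∧ p.1 ∈ M)}

/-- `M` is a stable model of program `R`: `M = LM(R^M)` and every integrity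
constraint whose negative body avoids `M` has a positive body not contained in `M`. -/
def stableModel {A : Type*} (R : Set (ASPRule A)) (M : Set A) : Prop :=
  M = LM (reduct R M) ∧
  ∀ r ∈ R, r.head = none → r.neg ∩ M = ∅ → ¬ r.pos ⊆ M

/-- Facts for a set of (input) atoms. -/
def inputFacts {A : Type*} (X : Set A) : Set (ASPRule A) :=
  {r | ∃ a ∈ X, r = ⟨some a, false, ∅, ∅⟩}

/-- Choice facts `{a}` for a set of atoms. -/
def choiceFacts {A : Type*} (X : Set A) : Set (ASPRule A) :=
  {r | ∃ a ∈ X, r = ⟨some a, true, ∅, ∅⟩}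

/-- An (unbundled) ASP program module `⟨R, I, O, H⟩`. -/
structure PreModule (A : Type*) where
  rules : Set (ASPRule A)
  I : Set A
  O : Set A
  H : Set A

namespace PreModule

variable {A : Type*}

/-- `At(P) = I ∪ O ∪ H`. -/
def atoms (P : PreModule A) : Set A := P.I ∪ P.O ∪ P.H

/-- Visible atoms `At_v(P) = I ∪ O`. -/
def Atv (P : PreModule A) : Set A := P.I ∪ P.O

/-- Well-formedness of a module: `I`, `O`, `H` pairwise disjoint, the atoms
of the rules lie in `At(P)`, and no rule head is an input atom. -/
def wf (P : PreModule A) : Prop :=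
  Disjoint P.I P.O ∧ Disjoint P.I P.H ∧ Disjoint P.O P.H ∧
  progAtoms P.rules ⊆ P.atoms ∧
  ∀ r ∈ P.rules, ∀ a, r.head = some a → a ∉ P.I

/-- Stable models of a module: `M ⊆ At(P)` that are stable models of the rules
together with a fact for every true input atom. -/
def AS (P : PreModule A) : Set (Set A) :=
  {M | M ⊆ P.atoms ∧ stableModel (P.rules ∪ inputFacts (M ∩ P.I)) M}

end PreModule

/-- Edge of the positive dependency graph: from `a` to `b` whenever some rule
has head `b` and `a` in its positive body. -/
def depEdge {A : Type*} (R : Set (ASPRule A)) (a b : A) : Prop :=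
  ∃ r ∈ R, r.head = some b ∧ a ∈ r.pos

/-- `P1` and `P2` are mutually independent: no cycle of the positive dependency
graph of `R1 ∪ R2` passes through atoms of both `At(P1)` and `At(P2)`. -/
def mutuallyIndependent {A : Type*} (P1 P2 : PreModule A) : Prop :=
  ¬ ∃ x y, x ∈ P1.atoms ∧ y ∈ P2.atoms ∧
      Relation.TransGen (depEdge (P1.rules ∪ P2.rules)) x y ∧
      Relation.TransGen (depEdge (P1.rules ∪ P2.rules)) y x

/-- Composition `P1 ⊕ P2`. -/
def oplus {A : Type*} (P1 P2 : PreModule A) : PreModule A :=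
  ⟨P1.rules ∪ P2.rules, (P1.I \ P2.O) ∪ (P2.I \ P1.O), P1.O ∪ P2.O, P1.H ∪ P2.H⟩

/-- `P1 ⊕ P2` is defined. -/
def oplusDefined {A : Type*} (P1 P2 : PreModule A) : Prop :=
  P1.O ∩ P2.O = ∅ ∧ P1.H ∩ P2.atoms = ∅ ∧ P2.H ∩ P1.atoms = ∅

/-- The module union `P1 ⊔ P2` is defined: `P1 ⊕ P2` is defined and `P1`, `P2`
are mutually independent (in which case `P1 ⊔ P2 = P1 ⊕ P2`). -/
def sqcupDefined {A : Type*} (P1 P2 : PreModule A) : Prop :=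
  oplusDefined P1 P2 ∧ mutuallyIndependent P1 P2

/-- Natural join of sets of interpretations w.r.t. modules `P1`, `P2`. -/
def natJoin {A : Type*} (P1 P2 : PreModule A) (A1 A2 : Set (Set A)) : Set (Set A) :=
  {M | ∃ M1 ∈ A1, ∃ M2 ∈ A2, M1 ∩ P2.Atv = M2 ∩ P1.Atv ∧ M = M1 ∪ M2}

/-- Relaxed composition `P1 ⊎ P2` (common output atoms allowed). -/
def uplus {A : Type*} (P1 P2 : PreModule A) : PreModule A :=
  ⟨P1.rules ∪ P2.rules, (P1.I ∪ P2.I) \ (P1.O ∪ P2.O), P1.O ∪ P2.O, P1.H ∪ P2.H⟩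

/-- `P1 ⊎ P2` is defined: the modules respect each other's hidden atoms. -/
def uplusDefined {A : Type*} (P1 P2 : PreModule A) : Prop :=
  P1.H ∩ P2.atoms = ∅ ∧ P2.H ∩ P1.atoms = ∅

/-- Hiding a set `S` of atoms in a module. -/
def hideS {A : Type*} (P : PreModule A) (S : Set A) : PreModule A :=
  ⟨P.rules ∪ choiceFacts (P.I ∩ S), P.I \ S, P.O \ S, P.H ∪ (P.Atv ∩ S)⟩

/-- Projecting a module onto a set `S` of atoms. -/
def projectS {A : Type*} (P : PreModule A) (S : Set A) : PreModule A :=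
  ⟨P.rules ∪ choiceFacts (P.I \ S), P.I ∩ S, P.O ∩ S, P.H ∪ (P.Atv \ S)⟩

/-- Renaming the head `o` of a rule to `o'`. -/
def renameRule {A : Type*} (o o' : A) (r : ASPRule A) : ASPRule A :=
  if r.head = some o then { r with head := some o' } else r

/-- Renamed output module `ρ_{o'←o}(P)`. -/
def renameOut {A : Type*} (P : PreModule A) (o o' : A) : PreModule A :=
  ⟨(renameRule o o' '' P.rules) ∪ {⟨none, false, {o'}, {o}⟩},
   P.I ∪ {o}, {o'} ∪ (P.O \ {o}), P.H⟩

/-- Renaming heads in a rule for every atom of `Os`, via `f`. -/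
def renameRuleS {A : Type*} (Os : Set A) (f : A → A) (r : ASPRule A) : ASPRule A :=
  { r with head := r.head.map fun a => if a ∈ Os then f a else a }

/-- Renamed output module `ρ_{O'←O}(P)` where `O' = f '' Os` atom by atom. -/
def renameOutS {A : Type*} (P : PreModule A) (Os : Set A) (f : A → A) : PreModule A :=
  ⟨(renameRuleS Os f '' P.rules) ∪ {r | ∃ o ∈ Os, r = ⟨none, false, {f o}, {o}⟩},
   P.I ∪ Os, (f '' Os) ∪ (P.O \ Os), P.H⟩

/-- The module `P_union` with rules `o ← o'` and `o ← o''` for each `o ∈ Os`,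
where `o' = f' o` and `o'' = f'' o`. -/
def Punion {A : Type*} (Os : Set A) (f' f'' : A → A) : PreModule A :=
  ⟨{r | ∃ o ∈ Os, r = ⟨some o, false, {f' o}, ∅⟩ ∨ r = ⟨some o, false, {f'' o}, ∅⟩},
   (f' '' Os) ∪ (f'' '' Os), Os, ∅⟩

/-- The module `P_filter` with constraints `⊥ ← o', not o''` and `⊥ ← not o', o''`. -/
def Pfilter {A : Type*} (Os : Set A) (f' f'' : A → A) : PreModule A :=
  ⟨{r | ∃ o ∈ Os, r = ⟨none, false, {f' o}, {f'' o}⟩ ∨ r = ⟨none, false, {f'' o}, {f' o}⟩},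
   (f' '' Os) ∪ (f'' '' Os), ∅, ∅⟩

/-- Transformed relaxed composition `P1 ⊎^RT P2`, with fresh primed and
double-primed atoms given by `f'` and `f''` on `O = O1 ∩ O2`. -/
def uplusRT {A : Type*} (P1 P2 : PreModule A) (f' f'' : A → A) : PreModule A :=
  hideS
    (oplus (oplus (renameOutS P1 (P1.O ∩ P2.O) f') (renameOutS P2 (P1.O ∩ P2.O) f''))
      (Punion (P1.O ∩ P2.O) f' f''))
    ((f' '' (P1.O ∩ P2.O)) ∪ (f'' '' (P1.O ∩ P2.O)))

/-- Conservative composition `P1 ⊗ P2`, with fresh primed and double-primed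
atoms given by `f'` and `f''` on `O = O1 ∩ O2`. -/
def otimesC {A : Type*} (P1 P2 : PreModule A) (f' f'' : A → A) : PreModule A :=
  hideS
    (oplus
      (oplus (oplus (renameOutS P1 (P1.O ∩ P2.O) f') (renameOutS P2 (P1.O ∩ P2.O) f''))
        (Punion (P1.O ∩ P2.O) f' f''))
      (Pfilter (P1.O ∩ P2.O) f' f''))
    ((f' '' (P1.O ∩ P2.O)) ∪ (f'' '' (P1.O ∩ P2.O)))

/-- The atoms `O' = f' '' (O1 ∩ O2)` and `O'' = f'' '' (O1 ∩ O2)` are fresh: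
`f'`, `f''` are injective on `O1 ∩ O2`, the images avoid all atoms of `P1` and
`P2`, and the two images are disjoint. -/
def freshPair {A : Type*} (P1 P2 : PreModule A) (f' f'' : A → A) : Prop :=
  Set.InjOn f' (P1.O ∩ P2.O) ∧ Set.InjOn f'' (P1.O ∩ P2.O) ∧
  (f' '' (P1.O ∩ P2.O)) ∩ (P1.atoms ∪ P2.atoms) = ∅ ∧
  (f'' '' (P1.O ∩ P2.O)) ∩ (P1.atoms ∪ P2.atoms) = ∅ ∧
  (f' '' (P1.O ∩ P2.O)) ∩ (f'' '' (P1.O ∩ P2.O)) = ∅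

/-- Modular equivalence `P ≡_m Q`: same input signature, same visible atoms,
and a bijection between the stable models preserving the visible parts. -/
def modEquiv {A : Type*} (P Q : PreModule A) : Prop :=
  P.I = Q.I ∧ P.Atv = Q.Atv ∧
  ∃ f : Set A → Set A, Set.BijOn f P.AS Q.AS ∧
    ∀ M ∈ P.AS, M ∩ P.Atv = f M ∩ Q.Atv

end

/-- The module union operator `⊔` is commutative, associative, and has identity
element `⟨∅,∅,∅,∅⟩`. -/
theorem sqcup_comm_assoc_identity {A : Type*} :
    (∀ P1 P2 : PreModule A, P1.wf → P2.wf → sqcupDefined P1 P2 →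
      sqcupDefined P2 P1 ∧ oplus P1 P2 = oplus P2 P1) ∧
    (∀ P1 P2 P3 : PreModule A, P1.wf → P2.wf → P3.wf →
      sqcupDefined P1 P2 → sqcupDefined (oplus P1 P2) P3 →
      sqcupDefined P2 P3 → sqcupDefined P1 (oplus P2 P3) →
      oplus (oplus P1 P2) P3 = oplus P1 (oplus P2 P3)) ∧
    (∀ P : PreModule A, P.wf →
      sqcupDefined P ⟨∅, ∅, ∅, ∅⟩ ∧ oplus P ⟨∅, ∅, ∅, ∅⟩ = P) := by
  refine ⟨?_, ?_, ?_⟩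
  · rintro P1 P2 _ _ ⟨⟨h1, h2, h3⟩, h4⟩
    refine ⟨⟨⟨by rw [Set.inter_comm]; exact h1, h3, h2⟩, ?_⟩, ?_⟩
    · rintro ⟨x, y, hx, hy, hxy, hyx⟩
      rw [Set.union_comm] at hxy hyx
      exact h4 ⟨y, x, hy, hx, hyx, hxy⟩
    · simp only [oplus, PreModule.mk.injEq]
      exact ⟨Set.union_comm _ _, Set.union_comm _ _, Set.union_comm _ _, Set.union_comm _ _⟩
  · intro P1 P2 P3 _ _ _ _ _ _ _
    simp only [oplus, PreModule.mk.injEq]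
    refine ⟨Set.union_assoc _ _ _, ?_, Set.union_assoc _ _ _, Set.union_assoc _ _ _⟩
    ext x
    simp only [Set.mem_union, Set.mem_diff]
    tauto
  · intro P _
    refine ⟨⟨⟨by simp, by simp [PreModule.atoms], by simp⟩, ?_⟩, ?_⟩
    · rintro ⟨x, y, hx, hy, -⟩
      simp [PreModule.atoms] at hy
    · simp [oplus]
end

section
/- The relaxed composition ⊎ is not compositional: there exist ASP program modules P1, P2, Q1, Q2 such that P1 and Q1 have identical input, output and hidden signatures, P2 and Q2 have identical input, output and hidden signatures, AS(P1) = AS(Q1) and AS(P2) = AS(Q2), both P1 ⊎ P2 and Q1 ⊎ Q2 are defined, and yet AS(P1 ⊎ P2) ≠ AS(Q1 ⊎ Q2). (Witnesses: P1 = ⟨{a.}, ∅, {a,b}, ∅⟩, Q1 = ⟨{a.; ⊥ ← a, b.}, ∅, {a,b}, ∅⟩, P2 = Q2 = ⟨{b.}, ∅, {b}, ∅⟩, where AS(P1) = AS(Q1) = {{a}}, AS(P2) = AS(Q2) = {{b}}, AS(P1 ⊎ P2) = {{a,b}} and AS(Q1 ⊎ Q2) = ∅.) Consequently there exists no binary operation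 ⋈' on sets of interpretations satisfying AS(P1 ⊎ P2) = AS(P1) ⋈' AS(P2) for all modules P1, P2 with P1 ⊎ P2 defined. -/
open scoped Classical

theorem LM_facts {A : Type*} (R : Set (ASPRule A)) (F M : Set A)
    (h1 : ∀ r ∈ R, (∃ x ∈ F, r = ⟨some x, false, ∅, ∅⟩) ∨ r.head = none)
    (h2 : ∀ x ∈ F, (⟨some x, false, ∅, ∅⟩ : ASPRule A) ∈ R) :
    LM (reduct R M) = F := by
  apply Set.Subset.antisymm
  · apply Set.sInter_subset_of_mem
    rintro ⟨p, q⟩ ⟨r, hr, h⟩ _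
    have hh : r.head = some p := by
      rcases h with h | h
      · exact h.2.1
      · exact h.2.1
    rcases h1 r hr with ⟨x, hx, rfl⟩ | hn
    · simp only [Option.some.injEq] at hh
      subst hh
      exact hx
    · rw [hn] at hh
      cases hh
  · intro x hx
    rw [LM, Set.mem_sInter]
    intro S hS
    refine hS (x, ∅) ⟨_, h2 x hx, Or.inl ⟨rfl, rfl, rfl, ?_⟩⟩ (Set.empty_subset _)
    simp

theorem AS_facts {A : Type*} (P : PreModule A) (F : Set A) (hI : P.I = ∅)
    (hF : F ⊆ P.atoms)
    (h1 : ∀ r ∈ P.rules, (∃ x ∈ F, r = ⟨some x, false, ∅, ∅⟩) ∨ r.head = none)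
    (h2 : ∀ x ∈ F, (⟨some x, false, ∅, ∅⟩ : ASPRule A) ∈ P.rules) (M : Set A) :
    M ∈ P.AS ↔ M = F ∧ ∀ r ∈ P.rules, r.head = none → r.neg ∩ F = ∅ → ¬ r.pos ⊆ F := by
  have e : P.rules ∪ inputFacts (M ∩ P.I) = P.rules := by
    simp [hI, inputFacts]
  simp only [PreModule.AS, Set.mem_setOf_eq, stableModel, e, LM_facts P.rules F M h1 h2]
  constructor
  · rintro ⟨_, rfl, h⟩
    exact ⟨rfl, h⟩
  · rintro ⟨rfl, h⟩
    exact ⟨hF, rfl, h⟩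

theorem uplus_witness {A : Type*} (a b : A) (hab : a ≠ b) :
    (∃ P1 P2 Q1 Q2 : PreModule A,
      P1.wf ∧ P2.wf ∧ Q1.wf ∧ Q2.wf ∧
      P1.I = Q1.I ∧ P1.O = Q1.O ∧ P1.H = Q1.H ∧
      P2.I = Q2.I ∧ P2.O = Q2.O ∧ P2.H = Q2.H ∧
      P1.AS = Q1.AS ∧ P2.AS = Q2.AS ∧
      uplusDefined P1 P2 ∧ uplusDefined Q1 Q2 ∧
      (uplus P1 P2).AS ≠ (uplus Q1 Q2).AS) := by
  refine ⟨⟨{⟨some a, false, ∅, ∅⟩}, ∅, {a, b}, ∅⟩, ⟨{⟨some b, false, ∅, ∅⟩}, ∅, {b}, ∅⟩,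
    ⟨{⟨some a, false, ∅, ∅⟩, ⟨none, false, {a, b}, ∅⟩}, ∅, {a, b}, ∅⟩,
    ⟨{⟨some b, false, ∅, ∅⟩}, ∅, {b}, ∅⟩, ?_, ?_, ?_, ?_, rfl, rfl, rfl, rfl, rfl, rfl,
    ?_, rfl, ?_, ?_, ?_⟩
  · simp [PreModule.wf, progAtoms, PreModule.atoms, ASPRule.atoms]
  · simp [PreModule.wf, progAtoms, PreModule.atoms, ASPRule.atoms]
  · simp [PreModule.wf, progAtoms, PreModule.atoms, ASPRule.atoms]
    rw [Set.pair_comm]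
  · simp [PreModule.wf, progAtoms, PreModule.atoms, ASPRule.atoms]
  · ext M
    rw [AS_facts _ {a} rfl (by simp [PreModule.atoms]) (by simp) (by simp),
      AS_facts _ {a} rfl (by simp [PreModule.atoms]) (by simp) (by simp)]
    simp [Set.insert_subset_iff, hab.symm]
  · simp [uplusDefined]
  · simp [uplusDefined]
  · intro h
    have h' := Set.ext_iff.1 h {a, b}
    rw [AS_facts _ {a, b} (by simp [uplus]) (by simp [PreModule.atoms, uplus])
        (by simp [uplus]) (by simp [uplus]),
      AS_facts _ {a, b} (by simp [uplus]) (by simp [PreModule.atoms, uplus])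
        (by simp [uplus]) (by simp [uplus])] at h'
    simp [uplus] at h'

/-- The relaxed composition `⊎` is not compositional: there are modules with
the same signatures and the same stable models whose relaxed compositions have
different stable models; consequently no join operation `⋈'` on sets of
interpretations satisfies `AS(P1 ⊎ P2) = AS(P1) ⋈' AS(P2)`. -/
theorem uplus_not_compositional {A : Type*} (a b : A) (hab : a ≠ b) :
    (∃ P1 P2 Q1 Q2 : PreModule A,
      P1.wf ∧ P2.wf ∧ Q1.wf ∧ Q2.wf ∧
      P1.I = Q1.I ∧ P1.O = Q1.O ∧ P1.H = Q1.H ∧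
      P2.I = Q2.I ∧ P2.O = Q2.O ∧ P2.H = Q2.H ∧
      P1.AS = Q1.AS ∧ P2.AS = Q2.AS ∧
      uplusDefined P1 P2 ∧ uplusDefined Q1 Q2 ∧
      (uplus P1 P2).AS ≠ (uplus Q1 Q2).AS) ∧
    ¬ ∃ join : Set (Set A) → Set (Set A) → Set (Set A),
        ∀ P1 P2 : PreModule A, P1.wf → P2.wf → uplusDefined P1 P2 →
          (uplus P1 P2).AS = join P1.AS P2.AS := by
  refine ⟨uplus_witness a b hab, ?_⟩
  rintro ⟨join, hj⟩
  obtain ⟨P1, P2, Q1, Q2, w1, w2, w3, w4, -, -, -, -, -, -, e1, e2, d1, d2, hne⟩ :=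
    uplus_witness a b hab
  exact hne (by rw [hj P1 P2 w1 w2 d1, hj Q1 Q2 w3 w4 d2, e1, e2])
end

section
/- For every ASP program module P = ⟨R, I, O, H⟩ and every set S of atoms, the Hide operation does not change the stable models but removes S from the visible signature: AS(P ∖ S) = AS(P) and At_v(P ∖ S) = At_v(P) ∖ S. -/
open scoped Classical

/-- Hiding a set `S` of atoms does not change the stable models of a module but
removes `S` from the visible signature. -/
theorem hide_AS_and_visible {A : Type*} (P : PreModule A) (hwf : P.wf) (S : Set A) :
    (hideS P S).AS = P.AS ∧ (hideS P S).Atv = P.Atv \ S := by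
  have hat : (hideS P S).atoms = P.atoms := by
    ext x
    simp only [hideS, PreModule.atoms, PreModule.Atv, Set.mem_union, Set.mem_diff, Set.mem_inter_iff]
    tauto
  have hred : ∀ M : Set A,
      reduct ((hideS P S).rules ∪ inputFacts (M ∩ (hideS P S).I)) M
        = reduct (P.rules ∪ inputFacts (M ∩ P.I)) M := by
    intro M
    ext ⟨a, B⟩
    constructor
    · rintro ⟨r, (hr | ⟨b, hb, rfl⟩) | ⟨b, hb, rfl⟩, h⟩
      · exact ⟨r, Or.inl hr, h⟩
      · rcases h with ⟨h, _⟩ | ⟨_, h1, h2, h3⟩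
        · simp at h
        · simp only [Option.some.injEq] at h1
          subst h1
          exact ⟨⟨some b, false, ∅, ∅⟩, Or.inr ⟨b, ⟨h3, hb.1⟩, rfl⟩,
            Or.inl ⟨rfl, rfl, h2.symm, Set.empty_inter M⟩⟩
      · exact ⟨_, Or.inr ⟨b, ⟨hb.1, hb.2.1⟩, rfl⟩, h⟩
    · rintro ⟨r, hr | ⟨b, hb, rfl⟩, h⟩
      · exact ⟨r, Or.inl (Or.inl hr), h⟩
      · by_cases hS : b ∈ S
        · rcases h with ⟨_, h1, h2, _⟩ | ⟨h, _⟩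
          · simp only [Option.some.injEq] at h1
            subst h1
            exact ⟨⟨some b, true, ∅, ∅⟩, Or.inl (Or.inr ⟨b, ⟨hb.2, hS⟩, rfl⟩),
              Or.inr ⟨rfl, rfl, h2.symm, hb.1⟩⟩
          · simp at h
        · exact ⟨_, Or.inr ⟨b, ⟨hb.1, hb.2, hS⟩, rfl⟩, h⟩
  refine ⟨?_, ?_⟩
  · ext M
    simp only [PreModule.AS, Set.mem_setOf_eq, stableModel, hat, hred]
    refine and_congr_right fun _ => and_congr_right fun _ => ?_
    constructor
    · rintro h r (hr | ⟨b, hb, rfl⟩) hn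
      · exact h r (Or.inl (Or.inl hr)) hn
      · simp at hn
    · rintro h r ((hr | ⟨b, hb, rfl⟩) | ⟨b, hb, rfl⟩) hn
      · exact h r (Or.inl hr) hn
      · simp at hn
      · simp at hn
  · ext x
    simp only [hideS, PreModule.Atv, Set.mem_union, Set.mem_diff]
    tauto
end

section
/- For every ASP program module P = ⟨R, I, O, H⟩ and every set S of atoms, the Project operation does not change the stable models but restricts the visible signature to S: AS(P|_S) = AS(P) and At_v(P|_S) = At_v(P) ∩ S. -/
open scoped Classical

/-- Projecting a module onto a set `S` of atoms does not change the stable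
models but restricts the visible signature to `S`. -/
theorem project_AS_and_visible {A : Type*} (P : PreModule A) (hwf : P.wf) (S : Set A) :
    (projectS P S).AS = P.AS ∧ (projectS P S).Atv = P.Atv ∩ S := by
  have hat : (projectS P S).atoms = P.atoms := by
    ext x
    simp only [projectS, PreModule.atoms, PreModule.Atv, Set.mem_union, Set.mem_inter_iff,
      Set.mem_diff]
    tauto
  have hred : ∀ M, reduct ((projectS P S).rules ∪ inputFacts (M ∩ (projectS P S).I)) M
      = reduct (P.rules ∪ inputFacts (M ∩ P.I)) M := by
    intro M
    ext p
    constructor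
    · rintro ⟨r, (hr | ⟨a, ha, rfl⟩) | ⟨a, ha, rfl⟩, h⟩
      · exact ⟨r, Or.inl hr, h⟩
      · rcases h with ⟨h, -⟩ | ⟨-, h1, h2, h3⟩
        · simp at h
        · simp only [Option.some.injEq] at h1
          subst h1
          exact ⟨_, Or.inr ⟨p.1, ⟨h3, ha.1⟩, rfl⟩, Or.inl ⟨rfl, rfl, h2.symm, by simp⟩⟩
      · exact ⟨_, Or.inr ⟨a, ⟨ha.1, ha.2.1⟩, rfl⟩, h⟩
    · rintro ⟨r, hr | ⟨a, ha, rfl⟩, h⟩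
      · exact ⟨r, Or.inl (Or.inl hr), h⟩
      · by_cases hS : a ∈ S
        · exact ⟨_, Or.inr ⟨a, ⟨ha.1, ha.2, hS⟩, rfl⟩, h⟩
        · rcases h with ⟨-, h1, h2, h3⟩ | ⟨h, -⟩
          · simp only [Option.some.injEq] at h1
            subst h1
            exact ⟨_, Or.inl (Or.inr ⟨p.1, ⟨ha.2, hS⟩, rfl⟩),
              Or.inr ⟨rfl, rfl, h2.symm, ha.1⟩⟩
          · simp at h
  refine ⟨?_, ?_⟩
  · ext M
    simp only [PreModule.AS, Set.mem_setOf_eq, stableModel, hat, hred]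
    refine and_congr_right fun _ => and_congr_right fun _ => ⟨fun H r hr hn => ?_,
      fun H r hr hn => ?_⟩
    · rcases hr with hr | ⟨a, ha, rfl⟩
      · exact H r (Or.inl (Or.inl hr)) hn
      · simp at hn
    · rcases hr with (hr | ⟨a, ha, rfl⟩) | ⟨a, ha, rfl⟩
      · exact H r (Or.inl hr) hn
      · simp at hn
      · simp at hn
  · simp only [projectS, PreModule.Atv]
    exact (Set.union_inter_distrib_right _ _ _).symm
end

section
/- Allowing common output atoms invalidates the module theorem: there exist ASP program modules P1 and P2 that respect each other's hidden atoms and are mutually independent but have O1 ∩ O2 ≠ ∅, such that AS(P1 ⊎ P2) ≠ AS(P1) ⋈ AS(P2). (Witnesses: P1 = ⟨{exp(c2).}, ∅, {exp(c2), exp(c3)}, ∅⟩ and P2 = ⟨{exp(c3).}, ∅, {exp(c1), exp(c2), exp(c3)}, ∅⟩, for which AS(P1 ⊎ P2) = {{exp(c2), exp(c3)}} while AS(P1) ⋈ AS(P2) = ∅.) -/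
open scoped Classical

theorem aux_union {A : Type*} (X Y : Set A) :
    inputFacts X ∪ inputFacts Y = inputFacts (X ∪ Y) := by
  ext r
  simp only [inputFacts, Set.mem_union, Set.mem_setOf_eq]
  constructor
  · rintro (⟨a, h, e⟩ | ⟨a, h, e⟩)
    · exact ⟨a, Or.inl h, e⟩
    · exact ⟨a, Or.inr h, e⟩
  · rintro ⟨a, h | h, e⟩
    · exact Or.inl ⟨a, h, e⟩
    · exact Or.inr ⟨a, h, e⟩

theorem aux_LM {A : Type*} (X M : Set A) : LM (reduct (inputFacts X) M) = X := by
  apply Set.Subset.antisymm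
  · apply Set.sInter_subset_of_mem
    rintro p ⟨r, ⟨a, ha, rfl⟩, h⟩ -
    rcases h with ⟨-, h, -⟩ | ⟨h, -⟩
    · have : a = p.1 := by simpa using h
      exact this ▸ ha
    · simp at h
  · intro a ha S hS
    exact hS (a, ∅) ⟨_, ⟨a, ha, rfl⟩, Or.inl ⟨rfl, rfl, rfl, by simp⟩⟩ (Set.empty_subset _)

theorem aux_stable {A : Type*} (X M : Set A) : stableModel (inputFacts X) M ↔ M = X := by
  unfold stableModel
  rw [aux_LM]
  constructor
  · exact fun h => h.1
  · refine fun h => ⟨h, ?_⟩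
    rintro r ⟨a, -, rfl⟩ h
    simp at h

theorem aux_AS {A : Type*} (X O M : Set A) (h : X ⊆ O) :
    M ∈ (PreModule.mk (inputFacts X) ∅ O ∅).AS ↔ M = X := by
  simp only [PreModule.AS, PreModule.atoms, Set.mem_setOf_eq, aux_union, aux_stable,
    Set.inter_empty, Set.union_empty, Set.empty_union]
  constructor
  · exact fun h => h.2
  · rintro rfl
    exact ⟨h, rfl⟩

theorem aux_wf {A : Type*} (X O : Set A) (h : X ⊆ O) :
    (PreModule.mk (inputFacts X) ∅ O ∅).wf := by
  refine ⟨by simp, by simp, by simp, ?_, by simp⟩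
  intro x hx
  simp only [progAtoms, Set.mem_iUnion] at hx
  obtain ⟨r, ⟨a, ha, rfl⟩, hx⟩ := hx
  have : x = a := by simpa [ASPRule.atoms] using hx
  subst this
  exact Or.inl (Or.inr (h ha))

theorem aux_edge {A : Type*} (X : Set A) (a b : A) : ¬ depEdge (inputFacts X) a b := by
  rintro ⟨r, ⟨c, -, rfl⟩, -, h⟩
  exact h

/-- Allowing common output atoms invalidates the module theorem: there exist
modules respecting each other's hidden atoms and mutually independent, but with
`O1 ∩ O2 ≠ ∅`, for which `AS(P1 ⊎ P2) ≠ AS(P1) ⋈ AS(P2)`. -/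
theorem common_outputs_invalidate_module_theorem {A : Type*}
    (e1 e2 e3 : A) (h12 : e1 ≠ e2) (h13 : e1 ≠ e3) (h23 : e2 ≠ e3) :
    ∃ P1 P2 : PreModule A,
      P1.wf ∧ P2.wf ∧ uplusDefined P1 P2 ∧ mutuallyIndependent P1 P2 ∧
      P1.O ∩ P2.O ≠ ∅ ∧
      (uplus P1 P2).AS ≠ natJoin P1 P2 P1.AS P2.AS := by
  have s1 : ({e2} : Set A) ⊆ {e2, e3} := by simp
  have s2 : ({e3} : Set A) ⊆ {e1, e2, e3} := by simp
  refine ⟨⟨inputFacts {e2}, ∅, {e2, e3}, ∅⟩, ⟨inputFacts {e3}, ∅, {e1, e2, e3}, ∅⟩,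
    aux_wf _ _ s1, aux_wf _ _ s2, ⟨by simp, by simp⟩, ?_, ?_, ?_⟩
  · rintro ⟨x, y, -, -, h, -⟩
    simp only [aux_union] at h
    induction h with
    | single h => exact aux_edge _ _ _ h
    | tail _ h _ => exact aux_edge _ _ _ h
  · exact Set.Nonempty.ne_empty ⟨e2, by simp, by simp⟩
  · intro h
    have hm : ({e2} ∪ {e3} : Set A) ∈ (uplus ⟨inputFacts {e2}, ∅, {e2, e3}, ∅⟩
        ⟨inputFacts {e3}, ∅, {e1, e2, e3}, ∅⟩).AS := by
      simp only [uplus, aux_union, Set.union_empty, Set.empty_diff]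
      exact (aux_AS _ _ _ (Set.union_subset_union s1 s2)).2 rfl
    rw [h] at hm
    obtain ⟨M1, h1, M2, h2, he, -⟩ := hm
    rw [aux_AS _ _ _ s1] at h1
    rw [aux_AS _ _ _ s2] at h2
    subst h1 h2
    have : e2 ∈ ({e3} : Set A) := by
      refine (he.subset ⟨rfl, ?_⟩).1
      simp [PreModule.Atv]
    exact h23 this
end

section
/- Positive cyclic dependencies between modules invalidate the module theorem: there exist ASP program modules P1 and P2 with O1 ∩ O2 = ∅ that respect each other's hidden atoms (so P1 ⊕ P2 is defined) but are not mutually independent, such that AS(P1 ⊕ P2) ≠ AS(P1) ⋈ AS(P2). (Witnesses: P1 = ⟨{airbag ← safe.}, {safe}, {airbag}, ∅⟩ and P2 = ⟨{safe ← airbag.}, {airbag}, {safe}, ∅⟩, for which AS(P1) = AS(P2) = {∅, {airbag, safe}}, AS(P1 ⊕ P2) = {∅}, while AS(P1) ⋈ AS(P2) = {∅, {airbag, safe}}.) -/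
open scoped Classical

theorem aux_closed {A : Type*} {R : Set (ASPRule A)} {M : Set A} (h : stableModel R M)
    (b : A) (B : Set A) (hr : (⟨some b, false, B, ∅⟩ : ASPRule A) ∈ R) (hB : B ⊆ M) : b ∈ M := by
  rw [h.1] at hB ⊢
  intro S hS
  refine hS (b, B) ⟨_, hr, Or.inl ⟨rfl, rfl, rfl, by simp⟩⟩ ?_
  intro x hx
  exact hB hx S hS

theorem aux_least {A : Type*} {R : Set (ASPRule A)} {M : Set A} (h : stableModel R M)
    (S : Set A) (hc : ∀ r ∈ R, r.isChoice = false ∧ ∀ b, r.head = some b → r.pos ⊆ S → b ∈ S) :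
    M ⊆ S := by
  intro x hx
  rw [h.1] at hx
  apply hx S
  rintro ⟨b, B⟩ ⟨r, hr, h1 | h1⟩ hB
  · obtain ⟨_, h2, h3, _⟩ := h1
    exact (hc r hr).2 b h2 (h3 ▸ hB)
  · have := (hc r hr).1
    simp_all

theorem aux_stable_s13 {A : Type*} {R : Set (ASPRule A)} {M : Set A}
    (hc : ∀ r ∈ R, r.isChoice = false ∧ ∃ b, r.head = some b ∧ (r.pos ⊆ M → b ∈ M))
    (hl : ∀ S : Set A, (∀ b B, (⟨some b, false, B, ∅⟩ : ASPRule A) ∈ R → B ⊆ S → b ∈ S) → M ⊆ S) :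
    stableModel R M := by
  refine ⟨Set.Subset.antisymm ?_ ?_, ?_⟩
  · intro x hx S hS
    refine hl S ?_ hx
    intro b B hr hB
    exact hS (b, B) ⟨_, hr, Or.inl ⟨rfl, rfl, rfl, by simp⟩⟩ hB
  · intro x hx
    apply hx M
    rintro ⟨b, B⟩ ⟨r, hr, h1 | h1⟩ hB
    · obtain ⟨_, h2, h3, _⟩ := h1
      obtain ⟨b', h4, h5⟩ := (hc r hr).2
      rw [h2] at h4
      cases h4
      exact h5 (h3 ▸ hB)
    · exact h1.2.2.2
  · intro r hr h0
    obtain ⟨b', h4, h5⟩ := (hc r hr).2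
    simp_all

theorem aux_AS_s13 {A : Type*} (a b : A) (h : a ≠ b) :
    (⟨{⟨some b, false, {a}, ∅⟩}, {a}, {b}, ∅⟩ : PreModule A).AS = {∅, {b, a}} := by
  ext M
  constructor
  · rintro ⟨hM, hs⟩
    by_cases ha : a ∈ M
    · right
      have hb : b ∈ M := aux_closed hs b {a} (by simp) (by simpa using ha)
      ext x
      constructor
      · intro hx
        have := hM hx
        simp [PreModule.atoms] at this ⊢
        tauto
      · rintro (rfl | rfl) <;> assumption
    · left
      refine Set.subset_empty_iff.1 (aux_least hs ∅ ?_)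
      rintro r (rfl | ⟨c, ⟨hc, hc'⟩, rfl⟩)
      · simp
      · cases hc'
        exact absurd hc ha
  · rintro (rfl | rfl)
    · refine ⟨by simp, aux_stable_s13 ?_ (by simp)⟩
      rintro r (rfl | ⟨c, ⟨hc, hc'⟩, rfl⟩)
      · simp
      · exact absurd hc (by simp)
    · refine ⟨?_, aux_stable_s13 ?_ ?_⟩
      · intro x hx
        simp [PreModule.atoms] at hx ⊢
        tauto
      · rintro r (rfl | ⟨c, ⟨hc, hc'⟩, rfl⟩)
        · simp
        · exact ⟨rfl, c, rfl, fun _ => hc⟩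
      · intro S hS
        have h1 : a ∈ S := hS a ∅ (Or.inr ⟨a, by simp, rfl⟩) (by simp)
        have h2 : b ∈ S := hS b {a} (Or.inl rfl) (by simpa using h1)
        rintro x (rfl | rfl) <;> assumption

theorem aux_wf_s13 {A : Type*} (a b : A) (h : a ≠ b) :
    (⟨{⟨some b, false, {a}, ∅⟩}, {a}, {b}, ∅⟩ : PreModule A).wf := by
  refine ⟨by simpa using h, by simp, by simp, ?_, ?_⟩
  · intro x hx
    simp [progAtoms, ASPRule.atoms, PreModule.atoms] at hx ⊢
    tauto
  · rintro r rfl c hc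
    cases hc
    simpa using h.symm

theorem aux_oplus {A : Type*} (a b : A) :
    (oplus (⟨{⟨some b, false, {a}, ∅⟩}, {a}, {b}, ∅⟩ : PreModule A)
      ⟨{⟨some a, false, {b}, ∅⟩}, {b}, {a}, ∅⟩).AS = {∅} := by
  ext M
  constructor
  · rintro ⟨hM, hs⟩
    refine Set.subset_empty_iff.1 (aux_least hs ∅ ?_)
    rintro r ((rfl | rfl) | ⟨c, ⟨hc, hc'⟩, rfl⟩)
    · simp
    · simp
    · simp [oplus] at hc'
  · rintro rfl
    refine ⟨by simp, aux_stable_s13 ?_ (by simp)⟩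
    rintro r ((rfl | rfl) | ⟨c, ⟨hc, hc'⟩, rfl⟩)
    · simp
    · simp
    · exact absurd hc (by simp)

/-- Positive cyclic dependencies between modules invalidate the module theorem:
there exist modules `P1 = ⟨{airbag ← safe}, {safe}, {airbag}, ∅⟩` and
`P2 = ⟨{safe ← airbag}, {airbag}, {safe}, ∅⟩` with `O1 ∩ O2 = ∅` and `P1 ⊕ P2`
defined but not mutually independent, such that `AS(P1) = AS(P2) =
{∅, {airbag, safe}}`, `AS(P1 ⊕ P2) = {∅}`, while `AS(P1) ⋈ AS(P2) =
{∅, {airbag, safe}}`, so `AS(P1 ⊕ P2) ≠ AS(P1) ⋈ AS(P2)`. -/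
theorem positive_cycles_invalidate_module_theorem {A : Type*}
    (safe airbag : A) (hne : safe ≠ airbag) :
    ∃ P1 P2 : PreModule A,
      P1 = ⟨{⟨some airbag, false, {safe}, ∅⟩}, {safe}, {airbag}, ∅⟩ ∧
      P2 = ⟨{⟨some safe, false, {airbag}, ∅⟩}, {airbag}, {safe}, ∅⟩ ∧
      P1.wf ∧ P2.wf ∧ P1.O ∩ P2.O = ∅ ∧ oplusDefined P1 P2 ∧
      ¬ mutuallyIndependent P1 P2 ∧
      P1.AS = {∅, {airbag, safe}} ∧ P2.AS = {∅, {airbag, safe}} ∧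
      (oplus P1 P2).AS = {∅} ∧
      natJoin P1 P2 P1.AS P2.AS = {∅, {airbag, safe}} ∧
      (oplus P1 P2).AS ≠ natJoin P1 P2 P1.AS P2.AS := by
  have hj : natJoin (⟨{⟨some airbag, false, {safe}, ∅⟩}, {safe}, {airbag}, ∅⟩ : PreModule A)
      ⟨{⟨some safe, false, {airbag}, ∅⟩}, {airbag}, {safe}, ∅⟩
      {∅, {airbag, safe}} {∅, {airbag, safe}} = {∅, {airbag, safe}} := by
    ext M
    constructor
    · rintro ⟨M1, (rfl | rfl), M2, (rfl | rfl), h, rfl⟩ <;> simp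
    · rintro (rfl | rfl)
      · exact ⟨∅, by simp, ∅, by simp, by simp, by simp⟩
      · refine ⟨{airbag, safe}, by simp, {airbag, safe}, by simp, ?_, by simp⟩
        simp only [PreModule.Atv]
        rw [Set.union_comm]
  have h2 := aux_AS_s13 airbag safe hne.symm
  rw [Set.pair_comm safe airbag] at h2
  refine ⟨_, _, rfl, rfl, aux_wf_s13 _ _ hne, aux_wf_s13 _ _ hne.symm, ?_, ?_, ?_,
    aux_AS_s13 _ _ hne, h2, aux_oplus _ _, ?_, ?_⟩
  · simpa using hne
  · exact ⟨by simpa using hne, by simp, by simp⟩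
  · intro h
    apply h
    refine ⟨safe, airbag, by simp [PreModule.atoms], by simp [PreModule.atoms], ?_, ?_⟩
    · exact .single ⟨_, Or.inl rfl, rfl, rfl⟩
    · exact .single ⟨_, Or.inr rfl, rfl, rfl⟩
  · rw [aux_AS_s13 _ _ hne, h2, hj]
  · rw [aux_oplus, aux_AS_s13 _ _ hne, h2, hj]
    intro h
    have h3 : ({airbag, safe} : Set A) ∈ ({∅} : Set (Set A)) := by
      rw [h]; simp
    have h4 : airbag ∈ (∅ : Set A) := by
      rw [← Set.mem_singleton_iff.1 h3]; simp
    exact h4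
end

section
/- Joining by minimization of models fails for mutually dependent modules: there exist ASP program modules P1 = ⟨{a ← b.; ⊥ ← not b.}, {b}, {a}, ∅⟩ and P2 = ⟨{b ← a.}, {a}, {b}, ∅⟩ such that AS(P1) = {{a,b}} and AS(P2) = {∅, {a,b}}, the relaxed composition P1 ⊎ P2 has empty input signature and no stable models, AS(P1 ⊎ P2) = ∅, while AS(P1) ⋈ AS(P2) = {{a,b}}, so {a,b} is a ⊆-minimal element of AS(P1) ⋈ AS(P2); hence no join operation that selects minimal elements of the natural join can coincide with the stable models of the composition. -/
open scoped Classical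

theorem eq_LM_iff {A : Type*} (Q : Set (A × Set A)) (M : Set A) :
    M = LM Q ↔ (∀ p ∈ Q, p.2 ⊆ M → p.1 ∈ M) ∧
      ∀ S : Set A, (∀ p ∈ Q, p.2 ⊆ S → p.1 ∈ S) → M ⊆ S := by
  constructor
  · rintro rfl
    refine ⟨?_, ?_⟩
    · intro p hp h S hS
      exact hS p hp (fun x hx => h hx S hS)
    · intro S hS x hx
      exact hx S hS
  · rintro ⟨h1, h2⟩
    apply Set.Subset.antisymm
    · intro x hx S hS
      exact h2 S hS hx
    · intro x hx
      exact hx M h1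

theorem closed_reduct_iff {A : Type*} (R : Set (ASPRule A)) (X M S : Set A)
    (hR : ∀ r ∈ R, r.isChoice = false) :
    (∀ p ∈ reduct (R ∪ inputFacts X) M, p.2 ⊆ S → p.1 ∈ S) ↔
    (∀ r ∈ R, ∀ h, r.head = some h → r.neg ∩ M = ∅ → r.pos ⊆ S → h ∈ S) ∧ X ⊆ S := by
  constructor
  · intro H
    refine ⟨?_, ?_⟩
    · intro r hr h hh hn hp
      exact H (h, r.pos) ⟨r, Or.inl hr, Or.inl ⟨hR r hr, hh, rfl, hn⟩⟩ hp
    · intro x hx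
      exact H (x, ∅) ⟨⟨some x, false, ∅, ∅⟩, Or.inr ⟨x, hx, rfl⟩,
        Or.inl ⟨rfl, rfl, rfl, Set.empty_inter _⟩⟩ (Set.empty_subset _)
  · rintro ⟨H1, H2⟩ ⟨h, B⟩ ⟨r, hr, hc⟩ hB
    rcases hr with hr | ⟨x, hx, rfl⟩
    · rcases hc with ⟨_, hh, hp, hn⟩ | ⟨hc, _⟩
      · exact H1 r hr h hh hn (hp ▸ hB)
      · rw [hR r hr] at hc
        cases hc
    · rcases hc with ⟨_, hh, _, _⟩ | ⟨hc, _⟩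
      · cases hh
        exact H2 hx
      · cases hc

theorem mem_AS_iff {A : Type*} (P : PreModule A) (M : Set A)
    (hR : ∀ r ∈ P.rules, r.isChoice = false) :
    M ∈ P.AS ↔ M ⊆ P.atoms ∧
      (∀ r ∈ P.rules, ∀ h, r.head = some h → r.neg ∩ M = ∅ → r.pos ⊆ M → h ∈ M) ∧
      (∀ S : Set A, (∀ r ∈ P.rules, ∀ h, r.head = some h → r.neg ∩ M = ∅ →
        r.pos ⊆ S → h ∈ S) → M ∩ P.I ⊆ S → M ⊆ S) ∧
      (∀ r ∈ P.rules, r.head = none → r.neg ∩ M = ∅ → ¬ r.pos ⊆ M) := by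
  unfold PreModule.AS stableModel
  rw [Set.mem_setOf_eq, eq_LM_iff, closed_reduct_iff _ _ _ _ hR]
  simp only [closed_reduct_iff _ _ _ _ hR]
  constructor
  · rintro ⟨h0, ⟨⟨h1, _⟩, h2⟩, h3⟩
    exact ⟨h0, h1, fun S a b => h2 S ⟨a, b⟩, fun r hr => h3 r (Or.inl hr)⟩
  · rintro ⟨h0, h1, h2, h3⟩
    refine ⟨h0, ⟨⟨h1, Set.inter_subset_left⟩, fun S a => h2 S a.1 a.2⟩, ?_⟩
    rintro r (hr | ⟨x, hx, rfl⟩)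
    · exact h3 r hr
    · intro h
      cases h

/-- Joining by minimization of models fails for mutually dependent modules:
for `P1 = ⟨{a ← b.; ⊥ ← not b.}, {b}, {a}, ∅⟩` and `P2 = ⟨{b ← a.}, {a}, {b}, ∅⟩`
we have `AS(P1) = {{a,b}}`, `AS(P2) = {∅, {a,b}}`, the relaxed composition has
empty input signature and no stable models, while `AS(P1) ⋈ AS(P2) = {{a,b}}`
with `{a,b}` a `⊆`-minimal element; hence selecting the minimal elements of the
natural join does not coincide with the stable models of the composition. -/
theorem minimization_join_fails {A : Type*} (a b : A) (hab : a ≠ b) :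
    ∃ P1 P2 : PreModule A,
      P1 = ⟨{⟨some a, false, {b}, ∅⟩, ⟨none, false, ∅, {b}⟩}, {b}, {a}, ∅⟩ ∧
      P2 = ⟨{⟨some b, false, {a}, ∅⟩}, {a}, {b}, ∅⟩ ∧
      P1.AS = {{a, b}} ∧
      P2.AS = {∅, {a, b}} ∧
      (uplus P1 P2).I = ∅ ∧
      (uplus P1 P2).AS = ∅ ∧
      natJoin P1 P2 P1.AS P2.AS = {{a, b}} ∧
      ({a, b} : Set A) ∈ natJoin P1 P2 P1.AS P2.AS ∧
      (∀ N ∈ natJoin P1 P2 P1.AS P2.AS, N ⊆ {a, b} → N = {a, b}) ∧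
      {N ∈ natJoin P1 P2 P1.AS P2.AS |
          ∀ N' ∈ natJoin P1 P2 P1.AS P2.AS, N' ⊆ N → N' = N} ≠
        (uplus P1 P2).AS := by
  refine ⟨_, _, rfl, rfl, ?_⟩
  set P1 : PreModule A :=
    ⟨{⟨some a, false, {b}, ∅⟩, ⟨none, false, ∅, {b}⟩}, {b}, {a}, ∅⟩ with hP1
  set P2 : PreModule A := ⟨{⟨some b, false, {a}, ∅⟩}, {a}, {b}, ∅⟩ with hP2
  have e1 : P1.AS = {{a, b}} := by
    ext M
    rw [mem_AS_iff _ _ (by simp [hP1])]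
    simp only [hP1, PreModule.atoms, Set.mem_singleton_iff]
    simp
    constructor
    · rintro ⟨h0, h1, -, h3⟩
      apply Set.Subset.antisymm
      · intro x hx
        have := h0 hx
        simp at this ⊢
        tauto
      · rintro x (rfl | rfl)
        · exact h1 h3
        · exact h3
    · rintro rfl
      refine ⟨by intro x; simp <;> tauto, by simp, ?_, by simp⟩
      intro S h1 h2
      have hb : b ∈ S := by simpa using h2
      rintro x (rfl | rfl)
      · exact h1 hb
      · exact hb
  have e2 : P2.AS = {∅, {a, b}} := by
    ext M
    rw [mem_AS_iff _ _ (by simp [hP2])]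
    simp only [hP2, PreModule.atoms, Set.mem_singleton_iff, Set.mem_insert_iff]
    simp
    constructor
    · rintro ⟨h0, h1, h2⟩
      by_cases ha : a ∈ M
      · right
        apply Set.Subset.antisymm
        · intro x hx
          have := h0 hx
          simp at this ⊢
          tauto
        · rintro x (rfl | rfl)
          · exact ha
          · exact h1 ha
      · left
        have := h2 ∅ (by simp) (by rintro x ⟨hx, rfl⟩; exact (ha hx).elim)
        exact Set.subset_empty_iff.mp this
    · rintro (rfl | rfl)
      · simp
      · refine ⟨by intro x; simp; tauto, by simp, ?_⟩
        intro S h1 h2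
        have ha : a ∈ S := by simpa using h2
        rintro x (rfl | rfl)
        · exact ha
        · exact h1 ha
  have eI : (uplus P1 P2).I = ∅ := by
    simp only [uplus, hP1, hP2]
    ext x
    simp
    tauto
  have e3 : (uplus P1 P2).AS = ∅ := by
    rw [Set.eq_empty_iff_forall_notMem]
    intro M hM
    rw [mem_AS_iff _ _ (by simp [uplus, hP1, hP2]), eI] at hM
    obtain ⟨-, -, h2, h3⟩ := hM
    have h := h2 ∅ (by simp [uplus, hP1, hP2]) (by simp)
    have hM := Set.subset_empty_iff.mp h
    subst hM
    exact h3 ⟨none, false, ∅, {b}⟩ (by simp [uplus, hP1, hP2]) rfl (by simp) (by simp)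
  have e4 : natJoin P1 P2 P1.AS P2.AS = {{a, b}} := by
    have v1 : P1.Atv = {b, a} := by
      ext x
      simp [hP1, PreModule.Atv]
      tauto
    have v2 : P2.Atv = {a, b} := by
      ext x
      simp [hP2, PreModule.Atv]
      tauto
    rw [e1, e2]
    ext M
    simp only [natJoin, v1, v2, Set.mem_setOf_eq, Set.mem_singleton_iff, Set.mem_insert_iff]
    constructor
    · rintro ⟨M1, rfl, M2, rfl | rfl, _, rfl⟩ <;> simp
    · rintro rfl
      exact ⟨_, rfl, _, Or.inr rfl, by rw [Set.pair_comm b a], by simp⟩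
  refine ⟨e1, e2, eI, e3, e4, ?_, ?_, ?_⟩
  · rw [e4]; rfl
  · rw [e4]
    intro N hN _
    exact hN
  · rw [e3, e4]
    intro h
    have : ({a, b} : Set A) ∈ (∅ : Set (Set A)) := by
      rw [← h]
      exact ⟨rfl, fun N hN _ => hN⟩
    exact this
end
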